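/- Let m, n be positive integers, let E ⊂ ℝⁿ be finite, and let f : E → [0,∞). Then there is a constant C depending only on m and n such that the family Γ⃗'_f = (Γ'_f(x,M))_{x∈E,M>0} is a (C,1)-convex shape field: each Γ'_f(x,M) is convex; Γ'_f(x,M') ⊆ Γ'_f(x,M) for 0 < M' ≤ M; and whenever 0 < δ ≤ 1, x ∈ E, M > 0, P₁, P₂ ∈ Γ'_f(x,M) satisfy |∂^β(P₁−P₂)(x)| ≤ Mδ^{m−|β|} for |β| ≤ m−1, and Q₁, Q₂ ∈ 𝒫 satisfy |∂^β Q_i(x)| ≤ δ^{−|β|} for |β| ≤ m−1 (i = 1, 2) and Q₁⊙_x Q₁ + Q₂⊙_x Q₂ = 1, then Q₁⊙_x Q₁⊙_x P₁ + Q₂⊙_x Q₂⊙_x P₂ ∈ Γ'_f(x, CM). -/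

import Mathlib

open scoped BigOperators

noncomputable section

abbrev Euc (n : ℕ) : Type := EuclideanSpace ℝ (Fin n)
abbrev MPoly (n : ℕ) : Type := MvPolynomial (Fin n) ℝ

/-- Partial derivative in the `i`-th coordinate direction. -/
noncomputable def pD {n : ℕ} (i : Fin n) (F : Euc n → ℝ) : Euc n → ℝ :=
  fun x => fderiv ℝ F x (EuclideanSpace.single i (1 : ℝ))

/-- The multi-index partial derivative `∂^α F`. -/
noncomputable def mD {n : ℕ} (α : Fin n → ℕ) (F : Euc n → ℝ) : Euc n → ℝ :=
  (((List.finRange n).flatMap fun i => List.replicate (α i) i)).foldr pD F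

/-- Partial derivative within a set. -/
noncomputable def pDW {n : ℕ} (s : Set (Euc n)) (i : Fin n) (F : Euc n → ℝ) : Euc n → ℝ :=
  fun x => fderivWithin ℝ F s x (EuclideanSpace.single i (1 : ℝ))

/-- Multi-index partial derivative within a set. -/
noncomputable def mDW {n : ℕ} (s : Set (Euc n)) (α : Fin n → ℕ) (F : Euc n → ℝ) : Euc n → ℝ :=
  (((List.finRange n).flatMap fun i => List.replicate (α i) i)).foldr (pDW s) F

/-- The order `|α|` of a multi-index. -/
def deg {n : ℕ} (α : Fin n → ℕ) : ℕ := ∑ i, α i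

/-- Evaluation of an `n`-variable polynomial at a point of `ℝⁿ`. -/
noncomputable def peval {n : ℕ} (P : MPoly n) (x : Euc n) : ℝ :=
  MvPolynomial.eval (fun i => x i) P

/-- `F ∈ C^m(ℝⁿ)` with `‖F‖_{C^m(ℝⁿ)} ≤ M`. -/
def CmNormLe (m n : ℕ) (F : Euc n → ℝ) (M : ℝ) : Prop :=
  ContDiff ℝ (m : ℕ∞) F ∧ ∀ α : Fin n → ℕ, deg α ≤ m → ∀ x : Euc n, |mD α F x| ≤ M

/-- `F ∈ C^{m-1,1}(ℝⁿ)` with `‖F‖_{C^{m-1,1}(ℝⁿ)} ≤ M`. -/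
def CmLipNormLe (m n : ℕ) (F : Euc n → ℝ) (M : ℝ) : Prop :=
  ContDiff ℝ ((m - 1 : ℕ) : ℕ∞) F ∧
  (∀ α : Fin n → ℕ, deg α ≤ m - 1 → ∀ x : Euc n, |mD α F x| ≤ M) ∧
  (∀ α : Fin n → ℕ, deg α = m - 1 → ∀ i : Fin n, ∀ x : Euc n, ∀ t : ℝ,
    |mD α F (x + t • EuclideanSpace.single i (1 : ℝ)) - mD α F x| ≤ M * |t|)

/-- `J_x(F) = P`, i.e. `P` is the `(m-1)`-st order Taylor polynomial of `F` at `x`. -/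
def IsJetAt (m n : ℕ) (F : Euc n → ℝ) (x : Euc n) (P : MPoly n) : Prop :=
  P.totalDegree ≤ m - 1 ∧
  ∀ α : Fin n → ℕ, deg α ≤ m - 1 → mD α (peval P) x = mD α F x

/-- `J_x^+(F) = P`, i.e. `P` is the `m`-th order Taylor polynomial of `F` at `x`. -/
def IsJetPlusAt (m n : ℕ) (F : Euc n → ℝ) (x : Euc n) (P : MPoly n) : Prop :=
  P.totalDegree ≤ m ∧
  ∀ α : Fin n → ℕ, deg α ≤ m → mD α (peval P) x = mD α F x

/-- Truncation of a polynomial: keep the monomials of total degree `≤ d`. -/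
noncomputable def truncLE {n : ℕ} (d : ℕ) (P : MPoly n) : MPoly n :=
  ∑ s ∈ P.support.filter (fun s => (s.sum fun _ e => e) ≤ d),
    MvPolynomial.monomial s (P.coeff s)

/-- Substitution `y ↦ y + v` in a polynomial. -/
noncomputable def polyShift {n : ℕ} (v : Fin n → ℝ) (P : MPoly n) : MPoly n :=
  MvPolynomial.aeval (fun i => (MvPolynomial.X i + MvPolynomial.C (v i) : MPoly n)) P

/-- The `(m-1)`-st order Taylor polynomial of a polynomial `P` at `x`. -/
noncomputable def jetTrunc (m n : ℕ) (x : Euc n) (P : MPoly n) : MPoly n :=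
  polyShift (fun i => -(x i)) (truncLE (m - 1) (polyShift (fun i => x i) P))

/-- Multiplication of `(m-1)`-jets at `x`: `P ⊙_x Q = J_x(PQ)`. -/
noncomputable def jmul (m n : ℕ) (x : Euc n) (P Q : MPoly n) : MPoly n :=
  jetTrunc m n x (P * Q)

/-- `Γ*(x,M)`. -/
def GammaStar (m n : ℕ) (x : Euc n) (M : ℝ) : Set (MPoly n) :=
  {P | ∃ F : Euc n → ℝ, CmNormLe m n F M ∧ (∀ y, 0 ≤ F y) ∧ IsJetAt m n F x P}

/-- `Γ_f(x,M)`. -/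
def GammaF (m n : ℕ) (f : Euc n → ℝ) (x : Euc n) (M : ℝ) : Set (MPoly n) :=
  {P ∈ GammaStar m n x M | peval P x = f x}

/-- `Γ'*(x,M)` (the `C^{m-1,1}` version). -/
def GammaStar' (m n : ℕ) (x : Euc n) (M : ℝ) : Set (MPoly n) :=
  {P | ∃ F : Euc n → ℝ, CmLipNormLe m n F M ∧ (∀ y, 0 ≤ F y) ∧ IsJetAt m n F x P}

/-- `Γ'_f(x,M)`. -/
def GammaF' (m n : ℕ) (f : Euc n → ℝ) (x : Euc n) (M : ℝ) : Set (MPoly n) :=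
  {P ∈ GammaStar' m n x M | peval P x = f x}

/-- `Γ₀⁺`. -/
def Gamma0plus (m n : ℕ) : Set (MPoly n) :=
  {P | P.totalDegree ≤ m ∧
    (∀ β : Fin n → ℕ, deg β ≤ m → |mD β (peval P) 0| ≤ 1) ∧
    (∀ x : Euc n, 0 ≤ peval P x + ‖x‖ ^ m) ∧
    (∀ ε : ℝ, 0 < ε → ∃ δ : ℝ, 0 < δ ∧ ∀ x : Euc n, ‖x‖ ≤ δ → 0 ≤ peval P x + ε * ‖x‖ ^ m)}

/-- `Γ̃₀'`. -/
def GammaTilde0' (m n : ℕ) : Set (MPoly n) :=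
  {P | P.totalDegree ≤ m - 1 ∧
    (∀ β : Fin n → ℕ, deg β ≤ m - 1 → |mD β (peval P) 0| ≤ 1) ∧
    ∀ x : Euc n, 0 ≤ peval P x + ‖x‖ ^ m}

/-- The closed axis-parallel cube with center `c` and sidelength `δ`. -/
def cube {n : ℕ} (c : Euc n) (δ : ℝ) : Set (Euc n) :=
  {y | ∀ i, |y i - c i| ≤ δ / 2}

/-- `F ∈ C^{m-1,1}(Q)` with `‖F‖_{C^{m-1,1}(Q)} ≤ M`, for the cube `Q` of center `c`,
sidelength `δ`. -/
def CmLipOnCubeLe (m n : ℕ) (c : Euc n) (δ : ℝ) (F : Euc n → ℝ) (M : ℝ) : Prop :=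
  ContDiffOn ℝ ((m - 1 : ℕ) : ℕ∞) F (cube c δ) ∧
  (∀ α : Fin n → ℕ, deg α ≤ m - 1 → ∀ x ∈ cube c δ, |mDW (cube c δ) α F x| ≤ M) ∧
  (∀ α : Fin n → ℕ, deg α = m - 1 → ∀ i : Fin n, ∀ x ∈ cube c δ, ∀ t : ℝ,
    x + t • EuclideanSpace.single i (1 : ℝ) ∈ cube c δ →
    |mDW (cube c δ) α F (x + t • EuclideanSpace.single i (1 : ℝ)) - mDW (cube c δ) α F x|
      ≤ M * |t|)

/-!
Since `Q₁(x)² + Q₂(x)² = 1`, we may assume `Q₂(x)² ≤ 1/2`. Let `F₁, F₂ ≥ 0` have jets `P₁, P₂` at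
`x`, and let `χ = η Q₂²`, where the cutoff `η` is `1` near `x` and is supported where `|y - x|` is
at most a small multiple of `δ`, so that `0 ≤ χ ≤ 1`. Then `F₁ - χ (F₁ - F₂) = (1 - χ) F₁ + χ F₂`
is nonnegative, and its jet at `x` is `Q₁ ⊙ Q₁ ⊙ P₁ + Q₂ ⊙ Q₂ ⊙ P₂`. By Taylor's formula the
derivatives of order `k` of `F₁ - F₂` are `O(M δ^(m-k))` on the ball of radius `δ` about `x`,
while those of `χ` are `O(δ^(-k))`. As `δ ≤ 1`, the Leibniz rule bounds the `C^{m-1,1}` norm of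
`χ (F₁ - F₂)` by a constant multiple of `M`.
-/

/-! ### Mixed partial derivatives -/

section MixedPartials

variable {n : ℕ}

/-- The list of coordinate directions along which `mD α` differentiates: each `i`, in increasing
order, repeated `α i` times. -/
def multiIndexList (α : Fin n → ℕ) : List (Fin n) :=
  (List.finRange n).flatMap fun i => List.replicate (α i) i

theorem length_multiIndexList (α : Fin n → ℕ) : (multiIndexList α).length = deg α := by
  simp [multiIndexList, deg, List.length_flatMap, Fin.sum_univ_def]

theorem count_multiIndexList (α : Fin n → ℕ) (i : Fin n) : (multiIndexList α).count i = α i := by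
  have hcount : (List.count i ∘ fun j => List.replicate (α j) j) =
      fun j => if j = i then α j else 0 := by
    funext j
    simp [List.count_replicate]
  rw [multiIndexList, List.count_flatMap, hcount, ← Fin.sum_univ_def]
  simp

theorem contDiff_pD {k : ℕ} (i : Fin n) {F : Euc n → ℝ} (hF : ContDiff ℝ (k + 1 : ℕ) F) :
    ContDiff ℝ k (pD i F) :=
  (hF.fderiv_right (by norm_cast)).clm_apply contDiff_const

theorem contDiff_foldr_pD {k : ℕ} (l : List (Fin n)) {F : Euc n → ℝ}
    (hF : ContDiff ℝ (l.length + k : ℕ) F) : ContDiff ℝ k (l.foldr pD F) := by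
  induction l generalizing k with
  | nil => simpa using hF
  | cons i l ih =>
    have hlen : l.length + (k + 1) = (i :: l).length + k := by
      rw [List.length_cons]
      ring
    exact contDiff_pD i (ih (hlen ▸ hF))

theorem pD_comm (i j : Fin n) {F : Euc n → ℝ} (hF : ContDiff ℝ 2 F) :
    pD i (pD j F) = pD j (pD i F) := by
  have hdiff : Differentiable ℝ (fderiv ℝ F) :=
    (hF.fderiv_right (m := 1) (by norm_num)).differentiable (by simp)
  have pD_pD (a b : Fin n) (x : Euc n) : pD a (pD b F) x =
      fderiv ℝ (fderiv ℝ F) x (EuclideanSpace.single a 1) (EuclideanSpace.single b 1) := by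
    unfold pD
    rw [fderiv_clm_apply (hdiff x) (differentiableAt_const _)]
    simp
  have hsymm (x : Euc n) : IsSymmSndFDerivAt ℝ F x := hF.contDiffAt.isSymmSndFDerivAt (by simp)
  funext x
  rw [pD_pD, pD_pD, (hsymm x).eq]

theorem foldr_pD_perm {l₁ l₂ : List (Fin n)} (h : l₁.Perm l₂) {F : Euc n → ℝ}
    (hF : ContDiff ℝ l₁.length F) : l₁.foldr pD F = l₂.foldr pD F := by
  induction h with
  | nil => rfl
  | cons i _ ih =>
    rw [List.foldr_cons, List.foldr_cons, ih (hF.of_le (by simp))]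
  | swap i j l => exact pD_comm _ _ (contDiff_foldr_pD (k := 2) l hF)
  | trans h₁₂ _ ih₁ ih₂ => rw [ih₁ hF, ih₂ (h₁₂.length_eq ▸ hF)]

theorem foldr_pD_eq_iteratedFDeriv (l : List (Fin n)) {F : Euc n → ℝ}
    (hF : ContDiff ℝ l.length F) (x : Euc n) :
    l.foldr pD F x =
      iteratedFDeriv ℝ l.length F x fun j => EuclideanSpace.single (l.get j) 1 := by
  induction l generalizing x with
  | nil => simp
  | cons i l ih =>
    have hlt : (l.length : WithTop ℕ∞) < (i :: l).length := by
      exact_mod_cast l.length.lt_succ_self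
    have hdiff := (hF.differentiable_iteratedFDeriv hlt) x
    let evalAt := ContinuousMultilinearMap.apply ℝ (fun _ : Fin l.length => Euc n) ℝ
      fun j => EuclideanSpace.single (l.get j) 1
    have htail : l.foldr pD F = fun y => evalAt (iteratedFDeriv ℝ l.length F y) :=
      funext (ih (hF.of_le hlt.le))
    have hderiv := evalAt.hasFDerivAt.comp x hdiff.hasFDerivAt
    rw [List.foldr_cons, htail, pD]
    refine (DFunLike.congr_fun hderiv.fderiv _).trans ?_
    exact (iteratedFDeriv_succ_apply_left (n := l.length)
      fun j => EuclideanSpace.single ((i :: l).get j) 1).symm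

theorem exists_mD_eq_iteratedFDeriv (α : Fin n → ℕ) :
    ∃ r : Fin (deg α) → Fin n, ∀ F : Euc n → ℝ, ContDiff ℝ (deg α) F → ∀ x,
      mD α F x = iteratedFDeriv ℝ (deg α) F x fun j => EuclideanSpace.single (r j) 1 := by
  rw [← length_multiIndexList α]
  exact ⟨(multiIndexList α).get, fun F => foldr_pD_eq_iteratedFDeriv (multiIndexList α)⟩

theorem exists_iteratedFDeriv_eq_mD {k : ℕ} (r : Fin k → Fin n) :
    ∃ α : Fin n → ℕ, deg α = k ∧ ∀ F : Euc n → ℝ, ContDiff ℝ k F → ∀ x,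
      iteratedFDeriv ℝ k F x (fun j => EuclideanSpace.single (r j) 1) = mD α F x := by
  obtain ⟨l, rfl, hr⟩ : ∃ l : List (Fin n), ∃ h : l.length = k,
      r = fun j => l.get (Fin.cast h.symm j) :=
    ⟨List.ofFn r, List.length_ofFn, by funext j; simp⟩
  have hperm : l.Perm (multiIndexList fun i => l.count i) :=
    List.perm_iff_count.2 fun i => (count_multiIndexList (fun i => l.count i) i).symm
  refine ⟨fun i => l.count i, by rw [← length_multiIndexList, ← hperm.length_eq], ?_⟩
  intro F hF x
  rw [hr]
  exact (foldr_pD_eq_iteratedFDeriv l hF x).symm.trans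
    (congrFun (foldr_pD_perm hperm hF) x)

theorem deg_zero : deg (0 : Fin n → ℕ) = 0 := by
  simp [deg]

variable {α : Fin n → ℕ} {F G : Euc n → ℝ}

theorem mD_add (hF : ContDiff ℝ (deg α) F) (hG : ContDiff ℝ (deg α) G) (x : Euc n) :
    mD α (F + G) x = mD α F x + mD α G x := by
  obtain ⟨r, hr⟩ := exists_mD_eq_iteratedFDeriv α
  rw [hr F hF, hr G hG, hr (F + G) (hF.add hG), iteratedFDeriv_add hF hG]
  rfl

theorem mD_const_smul (c : ℝ) (hF : ContDiff ℝ (deg α) F) (x : Euc n) :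
    mD α (c • F) x = c * mD α F x := by
  obtain ⟨r, hr⟩ := exists_mD_eq_iteratedFDeriv α
  rw [hr F hF, hr (c • F) (hF.const_smul c), iteratedFDeriv_const_smul_apply hF.contDiffAt]
  rfl

theorem abs_mD_le (hF : ContDiff ℝ (deg α) F) (x : Euc n) :
    |mD α F x| ≤ ‖iteratedFDeriv ℝ (deg α) F x‖ := by
  obtain ⟨r, hr⟩ := exists_mD_eq_iteratedFDeriv α
  rw [hr _ hF]
  simpa using (iteratedFDeriv ℝ (deg α) F x).le_opNorm fun j => EuclideanSpace.single (r j) 1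

theorem abs_mD_sub_mD_le (hF : ContDiff ℝ (deg α) F) (x y : Euc n) :
    |mD α F x - mD α F y| ≤
      ‖iteratedFDeriv ℝ (deg α) F x - iteratedFDeriv ℝ (deg α) F y‖ := by
  obtain ⟨r, hr⟩ := exists_mD_eq_iteratedFDeriv α
  rw [hr _ hF, hr _ hF]
  simpa using (iteratedFDeriv ℝ (deg α) F x - iteratedFDeriv ℝ (deg α) F y).le_opNorm
    fun j => EuclideanSpace.single (r j) 1

end MixedPartials

/-! ### Norm bounds from coordinate directions -/

section CoordinateDirections

variable {ι W : Type*} [Fintype ι] [DecidableEq ι] [NormedAddCommGroup W]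

theorem sum_smul_single (v : EuclideanSpace ℝ ι) :
    ∑ i, v i • EuclideanSpace.single i (1 : ℝ) = v := by
  simpa using (EuclideanSpace.basisFun ι ℝ).sum_repr v

theorem opNorm_le_of_norm_single_le [NormedSpace ℝ W] {k : ℕ}
    (T : ContinuousMultilinearMap ℝ (fun _ : Fin k => EuclideanSpace ℝ ι) W) {K : ℝ} (hK : 0 ≤ K)
    (h : ∀ r : Fin k → ι, ‖T fun j => EuclideanSpace.single (r j) 1‖ ≤ K) :
    ‖T‖ ≤ Fintype.card ι ^ k * K := by
  refine T.opNorm_le_bound (by positivity) fun v => ?_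
  have hT : T v =
      ∑ r : Fin k → ι, (∏ j, v j (r j)) • T fun j => EuclideanSpace.single (r j) 1 := by
    conv_lhs => rw [← funext fun j => sum_smul_single (v j)]
    rw [T.map_sum]
    exact Finset.sum_congr rfl fun r _ => T.map_smul_univ _ _
  have hterm (r : Fin k → ι) :
      ‖(∏ j, v j (r j)) • T fun j => EuclideanSpace.single (r j) 1‖ ≤ (∏ j, ‖v j‖) * K := by
    rw [norm_smul, norm_prod]
    gcongr with j
    · exact PiLp.norm_apply_le (v j) (r j)
    · exact h r
  calc ‖T v‖ ≤ ∑ _r : Fin k → ι, (∏ j, ‖v j‖) * K := hT ▸ norm_sum_le_of_le _ fun r _ => hterm r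
    _ = Fintype.card ι ^ k * K * ∏ j, ‖v j‖ := by
      simp only [Finset.sum_const, Finset.card_univ, Fintype.card_fun, Fintype.card_fin,
        nsmul_eq_mul, Nat.cast_pow]
      ring

theorem norm_sub_le_of_single_lipschitz {g : EuclideanSpace ℝ ι → W} {M : ℝ} (hM : 0 ≤ M)
    (h : ∀ i x (t : ℝ), ‖g (x + t • EuclideanSpace.single i 1) - g x‖ ≤ M * |t|)
    (y z : EuclideanSpace ℝ ι) : ‖g z - g y‖ ≤ Fintype.card ι * M * ‖z - y‖ := by
  have hpath (s : Finset ι) (t : ι → ℝ) :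
      ‖g (y + ∑ i ∈ s, t i • EuclideanSpace.single i 1) - g y‖ ≤ ∑ i ∈ s, M * |t i| := by
    induction s using Finset.induction_on with
    | empty => simp
    | insert i s hi ih =>
      rw [Finset.sum_insert hi, Finset.sum_insert hi, add_comm (t i • _), ← add_assoc]
      exact (norm_sub_le_norm_sub_add_norm_sub _ _ _).trans (add_le_add (h i _ (t i)) ih)
  have hdisp : y + ∑ i, (z - y) i • EuclideanSpace.single i (1 : ℝ) = z := by
    rw [sum_smul_single, add_sub_cancel]
  calc ‖g z - g y‖ ≤ ∑ i, M * |(z - y) i| := by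
        simpa only [hdisp] using hpath Finset.univ fun i => (z - y) i
    _ ≤ ∑ _i : ι, M * ‖z - y‖ := by
        gcongr with i
        exact PiLp.norm_apply_le (z - y) i
    _ = Fintype.card ι * M * ‖z - y‖ := by
        simp [mul_assoc]

end CoordinateDirections

section EuclideanBounds

variable {n : ℕ} {F : Euc n → ℝ}

theorem norm_iteratedFDeriv_le_of_mD_le {k : ℕ} (hF : ContDiff ℝ k F) {x : Euc n} {K : ℝ}
    (hK : 0 ≤ K) (h : ∀ α : Fin n → ℕ, deg α = k → |mD α F x| ≤ K) :
    ‖iteratedFDeriv ℝ k F x‖ ≤ n ^ k * K := by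
  have hbound := opNorm_le_of_norm_single_le (iteratedFDeriv ℝ k F x) hK fun r => by
    obtain ⟨α, hα, hr⟩ := exists_iteratedFDeriv_eq_mD r
    exact hr F hF x ▸ h α hα
  rwa [Fintype.card_fin] at hbound

theorem norm_iteratedFDeriv_mul_pow_le_of_mD_le {N k : ℕ} (hF : ContDiff ℝ N F) {x : Euc n}
    {K δ : ℝ} (hδ : 0 < δ) (h : ∀ α : Fin n → ℕ, deg α ≤ N → |mD α F x| * δ ^ deg α ≤ K)
    (hk : k ≤ N) : ‖iteratedFDeriv ℝ k F x‖ * δ ^ k ≤ (n + 1) ^ N * K := by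
  have hK : 0 ≤ K := le_trans (by positivity) (h 0 (deg_zero.trans_le N.zero_le))
  have hbound := norm_iteratedFDeriv_le_of_mD_le (hF.of_le (by exact_mod_cast hk))
    (div_nonneg hK (pow_nonneg hδ.le k)) fun α hα =>
      (le_div_iff₀ (by positivity)).2 (hα ▸ h α (hα.trans_le hk))
  calc _ ≤ n ^ k * (K / δ ^ k) * δ ^ k := by gcongr
    _ = n ^ k * K := by field_simp
    _ ≤ (n + 1) ^ N * K := by
      gcongr
      exact (pow_le_pow_left₀ n.cast_nonneg (le_add_of_nonneg_right zero_le_one) k).trans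
        (pow_le_pow_right₀ (le_add_of_nonneg_left n.cast_nonneg) hk)

namespace CmLipNormLe

variable {m : ℕ} {G : Euc n → ℝ} {M K : ℝ}

theorem nonneg (hF : CmLipNormLe m n F M) : 0 ≤ M :=
  (abs_nonneg _).trans (hF.2.1 0 (deg_zero.trans_le (Nat.zero_le _)) 0)

theorem norm_iteratedFDeriv_sub_le (hF : CmLipNormLe m n F M) (y z : Euc n) :
    ‖iteratedFDeriv ℝ (m - 1) F z - iteratedFDeriv ℝ (m - 1) F y‖ ≤
      n ^ (m - 1) * (n * M * ‖z - y‖) := by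
  have hM := hF.nonneg
  have hbound := opNorm_le_of_norm_single_le
    (iteratedFDeriv ℝ (m - 1) F z - iteratedFDeriv ℝ (m - 1) F y)
    (K := n * M * ‖z - y‖) (by positivity) fun r => by
      obtain ⟨α, hα, hr⟩ := exists_iteratedFDeriv_eq_mD r
      have hlip := norm_sub_le_of_single_lipschitz (g := mD α F) hM (hF.2.2 α hα) y z
      rw [Fintype.card_fin] at hlip
      rwa [sub_apply, hr F hF.1, hr F hF.1]
  rwa [Fintype.card_fin] at hbound

theorem mono (hF : CmLipNormLe m n F M) (h : M ≤ K) : CmLipNormLe m n F K :=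
  ⟨hF.1, fun α hα x => (hF.2.1 α hα x).trans h, fun α hα i x t =>
    (hF.2.2 α hα i x t).trans (mul_le_mul_of_nonneg_right h (abs_nonneg t))⟩

theorem add (hF : CmLipNormLe m n F M) (hG : CmLipNormLe m n G K) :
    CmLipNormLe m n (F + G) (M + K) := by
  have hadd {α : Fin n → ℕ} (hα : deg α ≤ m - 1) (x : Euc n) :
      mD α (F + G) x = mD α F x + mD α G x :=
    mD_add (hF.1.of_le (by exact_mod_cast hα)) (hG.1.of_le (by exact_mod_cast hα)) x
  refine ⟨hF.1.add hG.1, fun α hα x => ?_, fun α hα i x t => ?_⟩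
  · rw [hadd hα]
    exact (abs_add_le _ _).trans (add_le_add (hF.2.1 α hα x) (hG.2.1 α hα x))
  · rw [hadd hα.le, hadd hα.le, add_sub_add_comm, add_mul]
    exact (abs_add_le _ _).trans (add_le_add (hF.2.2 α hα i x t) (hG.2.2 α hα i x t))

theorem const_smul (hF : CmLipNormLe m n F M) (c : ℝ) : CmLipNormLe m n (c • F) (|c| * M) := by
  have hsmul {α : Fin n → ℕ} (hα : deg α ≤ m - 1) (x : Euc n) :
      mD α (c • F) x = c * mD α F x :=
    mD_const_smul c (hF.1.of_le (by exact_mod_cast hα)) x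
  refine ⟨hF.1.const_smul c, fun α hα x => ?_, fun α hα i x t => ?_⟩
  · rw [hsmul hα, abs_mul]
    exact mul_le_mul_of_nonneg_left (hF.2.1 α hα x) (abs_nonneg c)
  · rw [hsmul hα.le, hsmul hα.le, ← mul_sub, abs_mul, mul_assoc]
    exact mul_le_mul_of_nonneg_left (hF.2.2 α hα i x t) (abs_nonneg c)

theorem sub (hF : CmLipNormLe m n F M) (hG : CmLipNormLe m n G K) :
    CmLipNormLe m n (F - G) (M + K) := by
  simpa [sub_eq_add_neg] using hF.add (hG.const_smul (-1))

end CmLipNormLe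

end EuclideanBounds

/-! ### Equality of jets -/

section Jets

theorem iteratedFDeriv_mul_eq_zero {V A : Type*} [NormedAddCommGroup V] [NormedSpace ℝ V]
    [NormedRing A] [NormedAlgebra ℝ A] {k : ℕ} {x : V} {F G : V → A} (hF : ContDiff ℝ k F)
    (hG : ContDiff ℝ k G)
    (h : ∀ i j, i + j = k → iteratedFDeriv ℝ i F x = 0 ∨ iteratedFDeriv ℝ j G x = 0) :
    iteratedFDeriv ℝ k (F * G) x = 0 := by
  refine norm_le_zero_iff.1 ((norm_iteratedFDeriv_mul_le hF hG x le_rfl).trans_eq ?_)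
  refine Finset.sum_eq_zero fun i hi => ?_
  rcases h i (k - i) (Nat.add_sub_cancel' (Nat.lt_succ_iff.1 (Finset.mem_range.1 hi))) with h | h
  <;> simp [h]

/-- `F` and `G` are of class `C^N` and have the same `N`-jet at `x`. -/
structure JetEq {V A : Type*} [NormedAddCommGroup V] [NormedSpace ℝ V] [NormedAddCommGroup A]
    [NormedSpace ℝ A] (N : ℕ) (x : V) (F G : V → A) : Prop where
  contDiff_left : ContDiff ℝ N F
  contDiff_right : ContDiff ℝ N G
  iteratedFDeriv_eq : ∀ k ≤ N, iteratedFDeriv ℝ k F x = iteratedFDeriv ℝ k G x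

namespace JetEq

variable {V A : Type*} [NormedAddCommGroup V] [NormedSpace ℝ V] {N : ℕ} {x : V}

section AddCommGroup

variable [NormedAddCommGroup A] [NormedSpace ℝ A] {F F' G G' H : V → A}

theorem refl (x : V) (hF : ContDiff ℝ N F) : JetEq N x F F :=
  ⟨hF, hF, fun _ _ => rfl⟩

theorem symm (h : JetEq N x F G) : JetEq N x G F :=
  ⟨h.contDiff_right, h.contDiff_left, fun k hk => (h.iteratedFDeriv_eq k hk).symm⟩

theorem trans (hFG : JetEq N x F G) (hGH : JetEq N x G H) : JetEq N x F H :=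
  ⟨hFG.contDiff_left, hGH.contDiff_right, fun k hk =>
    (hFG.iteratedFDeriv_eq k hk).trans (hGH.iteratedFDeriv_eq k hk)⟩

instance : Trans (JetEq (A := A) N x) (JetEq N x) (JetEq N x) :=
  ⟨trans⟩

theorem apply_eq (h : JetEq N x F G) : F x = G x := by
  simpa using congrArg (fun T => T ![]) (h.iteratedFDeriv_eq 0 N.zero_le)

theorem of_eventuallyEq (hF : ContDiff ℝ N F) (hG : ContDiff ℝ N G)
    (h : F =ᶠ[nhds x] G) : JetEq N x F G :=
  ⟨hF, hG, fun k _ => (h.iteratedFDeriv ℝ k).eq_of_nhds⟩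

theorem add (hF : JetEq N x F F') (hG : JetEq N x G G') : JetEq N x (F + G) (F' + G') := by
  refine ⟨hF.contDiff_left.add hG.contDiff_left, hF.contDiff_right.add hG.contDiff_right,
    fun k hk => ?_⟩
  have hkN : (k : WithTop ℕ∞) ≤ N := by exact_mod_cast hk
  rw [iteratedFDeriv_add (hF.contDiff_left.of_le hkN) (hG.contDiff_left.of_le hkN),
    iteratedFDeriv_add (hF.contDiff_right.of_le hkN) (hG.contDiff_right.of_le hkN),
    Pi.add_apply, Pi.add_apply, hF.iteratedFDeriv_eq k hk, hG.iteratedFDeriv_eq k hk]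

theorem sub (hF : JetEq N x F F') (hG : JetEq N x G G') : JetEq N x (F - G) (F' - G') := by
  refine ⟨hF.contDiff_left.sub hG.contDiff_left, hF.contDiff_right.sub hG.contDiff_right,
    fun k hk => ?_⟩
  have hkN : (k : WithTop ℕ∞) ≤ N := by exact_mod_cast hk
  rw [iteratedFDeriv_sub (hF.contDiff_left.of_le hkN) (hG.contDiff_left.of_le hkN),
    iteratedFDeriv_sub (hF.contDiff_right.of_le hkN) (hG.contDiff_right.of_le hkN),
    Pi.sub_apply, Pi.sub_apply, hF.iteratedFDeriv_eq k hk, hG.iteratedFDeriv_eq k hk]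

theorem const_smul (c : ℝ) (hF : JetEq N x F F') : JetEq N x (c • F) (c • F') := by
  refine ⟨hF.contDiff_left.const_smul c, hF.contDiff_right.const_smul c, fun k hk => ?_⟩
  have hkN : (k : WithTop ℕ∞) ≤ N := by exact_mod_cast hk
  rw [iteratedFDeriv_const_smul_apply (hF.contDiff_left.of_le hkN).contDiffAt,
    iteratedFDeriv_const_smul_apply (hF.contDiff_right.of_le hkN).contDiffAt,
    hF.iteratedFDeriv_eq k hk]

theorem sub_right (h : JetEq N x F G) : JetEq N x (F - G) 0 := by
  simpa only [sub_self] using h.sub (refl x h.contDiff_right)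

theorem of_sub (hG : ContDiff ℝ N G) (h : JetEq N x (F - G) 0) : JetEq N x F G := by
  simpa only [sub_add_cancel, zero_add] using h.add (refl x hG)

theorem comp_sub (h : JetEq N x F G) (a : V) :
    JetEq N (x + a) (fun y => F (y - a)) fun y => G (y - a) :=
  ⟨h.contDiff_left.comp (contDiff_id.sub contDiff_const),
    h.contDiff_right.comp (contDiff_id.sub contDiff_const), fun k hk => by
      simpa only [iteratedFDeriv_comp_sub, add_sub_cancel_right] using h.iteratedFDeriv_eq k hk⟩

end AddCommGroup

variable [NormedRing A] [NormedAlgebra ℝ A] {F F' G G' : V → A}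

theorem left_mul_zero (hF : ContDiff ℝ N F) (hG : JetEq N x G 0) : JetEq N x (F * G) 0 := by
  refine ⟨hF.mul hG.contDiff_left, hG.contDiff_right, fun k hk => ?_⟩
  have hkN : (k : WithTop ℕ∞) ≤ N := by exact_mod_cast hk
  rw [iteratedFDeriv_mul_eq_zero (hF.of_le hkN) (hG.contDiff_left.of_le hkN) fun i j hij =>
    Or.inr ((hG.iteratedFDeriv_eq j (by omega)).trans (by simp)), iteratedFDeriv_zero]
  rfl

theorem right_mul_zero (hF : JetEq N x F 0) (hG : ContDiff ℝ N G) : JetEq N x (F * G) 0 := by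
  refine ⟨hF.contDiff_left.mul hG, hF.contDiff_right, fun k hk => ?_⟩
  have hkN : (k : WithTop ℕ∞) ≤ N := by exact_mod_cast hk
  rw [iteratedFDeriv_mul_eq_zero (hF.contDiff_left.of_le hkN) (hG.of_le hkN) fun i j hij =>
    Or.inl ((hF.iteratedFDeriv_eq i (by omega)).trans (by simp)), iteratedFDeriv_zero]
  rfl

theorem mul (hF : JetEq N x F F') (hG : JetEq N x G G') : JetEq N x (F * G) (F' * G') := by
  have hdecomp : F * G - F' * G' = F * (G - G') + (F - F') * G' := by noncomm_ring
  refine of_sub (hF.contDiff_right.mul hG.contDiff_right) ?_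
  rw [hdecomp]
  simpa only [add_zero] using
    (left_mul_zero hF.contDiff_left hG.sub_right).add
      (hF.sub_right.right_mul_zero hG.contDiff_right)

end JetEq

theorem jetEq_iff_mD_eq {n N : ℕ} {x : Euc n} {F G : Euc n → ℝ} (hF : ContDiff ℝ N F)
    (hG : ContDiff ℝ N G) :
    JetEq N x F G ↔ ∀ α : Fin n → ℕ, deg α ≤ N → mD α F x = mD α G x := by
  refine ⟨fun h α hα => ?_, fun h => ⟨hF, hG, fun k hk => ?_⟩⟩
  · obtain ⟨r, hr⟩ := exists_mD_eq_iteratedFDeriv α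
    rw [hr F (hF.of_le (by exact_mod_cast hα)), hr G (hG.of_le (by exact_mod_cast hα)),
      h.iteratedFDeriv_eq _ hα]
  · have hkN : (k : WithTop ℕ∞) ≤ N := by exact_mod_cast hk
    refine sub_eq_zero.1 (norm_le_zero_iff.1 ?_)
    refine (opNorm_le_of_norm_single_le _ le_rfl fun r => ?_).trans_eq (mul_zero _)
    obtain ⟨α, hα, hr⟩ := exists_iteratedFDeriv_eq_mD r
    rw [sub_apply, hr F (hF.of_le hkN), hr G (hG.of_le hkN), h α (hα.trans_le hk), sub_self,
      norm_zero]

end Jets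

/-! ### Polynomials and jet multiplication -/

section Polynomials

open MvPolynomial

variable {n : ℕ} (P Q : MPoly n)

theorem peval_add : peval (P + Q) = peval P + peval Q :=
  funext fun _ => map_add _ P Q

theorem peval_sub : peval (P - Q) = peval P - peval Q :=
  funext fun _ => map_sub _ P Q

theorem peval_mul : peval (P * Q) = peval P * peval Q :=
  funext fun _ => map_mul _ P Q

theorem peval_smul (c : ℝ) : peval (c • P) = c • peval P :=
  funext fun _ => smul_eval _ P c

theorem peval_one : peval (1 : MPoly n) = 1 :=
  funext fun _ => map_one _

theorem peval_C (c : ℝ) : peval (C c : MPoly n) = fun _ => c :=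
  funext fun _ => eval_C c

theorem peval_X (i : Fin n) : peval (X i : MPoly n) = fun y => y i :=
  funext fun _ => eval_X i

theorem contDiff_peval {N : WithTop ℕ∞} : ContDiff ℝ N (peval P) := by
  induction P using MvPolynomial.induction_on with
  | C c => exact peval_C c ▸ contDiff_const
  | add P Q hP hQ => exact peval_add P Q ▸ hP.add hQ
  | mul_X P i hP =>
    rw [peval_mul, peval_X]
    exact hP.mul (EuclideanSpace.proj (𝕜 := ℝ) i).contDiff

theorem pD_peval (i : Fin n) : pD i (peval P) = peval (pderiv i P) := by
  have hdiff (P : MPoly n) : Differentiable ℝ (peval P) :=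
    (contDiff_peval P (N := 1)).differentiable one_ne_zero
  funext y
  induction P using MvPolynomial.induction_on with
  | C c =>
    rw [pD, peval_C, pderiv_C]
    simp [peval]
  | add P Q hP hQ =>
    rw [peval_add, pD, fderiv_add (hdiff P y) (hdiff Q y), map_add, peval_add, Pi.add_apply,
      ← hP, ← hQ]
    rfl
  | mul_X P j hP =>
    have hX : HasFDerivAt (peval (X j : MPoly n)) (EuclideanSpace.proj (𝕜 := ℝ) j) y := by
      rw [peval_X]
      exact (EuclideanSpace.proj (𝕜 := ℝ) j).hasFDerivAt
    rw [peval_mul, pD, fderiv_mul (hdiff P y) hX.differentiableAt, hX.fderiv, pderiv_mul, peval_add,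
      Pi.add_apply, peval_mul, peval_mul, Pi.mul_apply, Pi.mul_apply, ← hP]
    rcases eq_or_ne i j with rfl | hij
    · simp [pD, peval, mul_comm, add_comm]
    · simp [pD, peval, pderiv_X_of_ne hij.symm, hij.symm, mul_comm]

theorem mD_peval (α : Fin n → ℕ) :
    mD α (peval P) = peval ((multiIndexList α).foldr (fun i => pderiv i) P) := by
  rw [mD, ← multiIndexList]
  induction multiIndexList α with
  | nil => rfl
  | cons i l ih => rw [List.foldr_cons, List.foldr_cons, ih, pD_peval]

variable {P Q}

theorem coeff_foldr_pderiv_eq_zero {l : List (Fin n)} {s : Fin n →₀ ℕ}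
    (h : ∀ t : Fin n →₀ ℕ, t.degree = s.degree + l.length → coeff t P = 0) :
    coeff s (l.foldr (fun i => pderiv i) P) = 0 := by
  induction l generalizing s with
  | nil => exact h s rfl
  | cons i l ih =>
    rw [List.foldr_cons, coeff_pderiv, ih fun t ht => h t ?_, zero_mul]
    rw [ht, map_add, Finsupp.degree_single, List.length_cons]
    ring

theorem iteratedFDeriv_peval_of_totalDegree_lt {k : ℕ} (h : P.totalDegree < k) (y : Euc n) :
    iteratedFDeriv ℝ k (peval P) y = 0 := by
  refine norm_le_zero_iff.1 ((norm_iteratedFDeriv_le_of_mD_le (contDiff_peval P) le_rfl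
    fun α hα => ?_).trans_eq (mul_zero _))
  have hzero : (multiIndexList α).foldr (fun i => pderiv i) P = 0 := by
    ext s
    refine (coeff_foldr_pderiv_eq_zero fun t ht => coeff_eq_zero_of_totalDegree_lt ?_).trans
      (coeff_zero s).symm
    rw [← Finsupp.degree_apply, ht, length_multiIndexList, hα]
    omega
  rw [mD_peval, hzero]
  simp [peval]

theorem jetEq_peval_zero_of_coeff {N : ℕ}
    (h : ∀ s : Fin n →₀ ℕ, s.degree ≤ N → coeff s P = 0) : JetEq N 0 (peval P) 0 := by
  refine ⟨contDiff_peval P, contDiff_const, fun k hk => ?_⟩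
  rw [iteratedFDeriv_zero]
  refine norm_le_zero_iff.1 ((norm_iteratedFDeriv_le_of_mD_le (contDiff_peval P) le_rfl
    fun α hα => ?_).trans_eq (mul_zero _))
  have hcoeff : coeff 0 ((multiIndexList α).foldr (fun i => pderiv i) P) = 0 :=
    coeff_foldr_pderiv_eq_zero fun t ht => h t (by
      rw [ht, length_multiIndexList, hα, map_zero, zero_add]
      exact hk)
  rw [mD_peval, peval]
  simpa [eval_zero', constantCoeff_eq] using hcoeff

variable (P)

theorem peval_polyShift (v : Euc n) :
    peval (polyShift (fun i => v i) P) = fun y => peval P (y + v) := by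
  funext y
  unfold peval polyShift
  induction P using MvPolynomial.induction_on with
  | C c => simp
  | add P Q hP hQ => rw [map_add, map_add, map_add, hP, hQ]
  | mul_X P i hP =>
    rw [map_mul, map_mul, map_mul, hP]
    simp

theorem totalDegree_polyShift_le (v : Fin n → ℝ) :
    (polyShift v P).totalDegree ≤ P.totalDegree := by
  have hX (i : Fin n) : (X i + C (v i) : MPoly n).totalDegree ≤ 1 :=
    (totalDegree_add _ _).trans (by simp)
  rw [polyShift, aeval_def, eval₂_eq']
  refine (totalDegree_finsetSum _ _).trans (Finset.sup_le fun s hs => ?_)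
  calc _ ≤ _ := totalDegree_mul _ _
    _ ≤ 0 + ∑ i, s i * 1 := by
      refine add_le_add (totalDegree_C _).le
        ((totalDegree_finsetProd _ _).trans (Finset.sum_le_sum fun i _ => ?_))
      exact (totalDegree_pow _ _).trans (Nat.mul_le_mul_left _ (hX i))
    _ = s.sum fun _ e => e := by simp [Finsupp.sum_fintype]
    _ ≤ P.totalDegree := le_totalDegree hs

theorem coeff_truncLE (d : ℕ) (s : Fin n →₀ ℕ) :
    coeff s (truncLE d P) = if s.degree ≤ d then coeff s P else 0 := by
  rw [truncLE, coeff_sum]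
  have hdegree : s.degree = s.sum fun _ e => e := rfl
  simp only [coeff_monomial, Finset.sum_ite_eq', Finset.mem_filter, mem_support_iff, hdegree]
  by_cases hs : coeff s P = 0 <;> simp [hs]

theorem totalDegree_truncLE_le (d : ℕ) : (truncLE d P).totalDegree ≤ d :=
  (totalDegree_finsetSum _ _).trans (Finset.sup_le fun _ hs =>
    (totalDegree_monomial_le _ _).trans (Finset.mem_filter.1 hs).2)

variable {m : ℕ} (x : Euc n)

theorem totalDegree_jetTrunc_le : (jetTrunc m n x P).totalDegree ≤ m - 1 :=
  (totalDegree_polyShift_le _ _).trans (totalDegree_truncLE_le _ _)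

theorem peval_jetTrunc : peval (jetTrunc m n x P) =
    fun y => peval (truncLE (m - 1) (polyShift (fun i => x i) P)) (y - x) := by
  simp only [sub_eq_add_neg]
  exact peval_polyShift _ (-x)

theorem jetEq_jetTrunc : JetEq (m - 1) x (peval (jetTrunc m n x P)) (peval P) := by
  have htrunc : JetEq (m - 1) 0 (peval (truncLE (m - 1) (polyShift (fun i => x i) P)))
      (peval (polyShift (fun i => x i) P)) := by
    refine JetEq.of_sub (contDiff_peval _) ?_
    rw [← peval_sub]
    refine jetEq_peval_zero_of_coeff fun s hs => ?_
    rw [coeff_sub, coeff_truncLE, if_pos hs, sub_self]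
  have hshift := htrunc.comp_sub x
  simp only [← peval_jetTrunc, peval_polyShift, zero_add, sub_add_cancel] at hshift
  exact hshift

theorem jetEq_jmul (P Q : MPoly n) :
    JetEq (m - 1) x (peval (jmul m n x P Q)) (peval P * peval Q) :=
  peval_mul P Q ▸ jetEq_jetTrunc (P * Q) x

end Polynomials

/-! ### Estimates at a fixed scale -/

section ScaledBounds

open Metric

variable {V A : Type*} [NormedAddCommGroup V] [NormedSpace ℝ V]

theorem norm_mul_pow_le_of_lipschitz [NormedAddCommGroup A] {a b : A} {k : ℕ} {δ r K L : ℝ}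
    (hδ : 0 < δ) (hb : ‖b‖ * δ ^ k ≤ K) (hab : ‖a - b‖ * δ ^ (k + 1) ≤ L * r) (hr : r ≤ δ)
    (hL : 0 ≤ L) : ‖a‖ * δ ^ k ≤ K + L := by
  have hsub : ‖a - b‖ * δ ^ k ≤ L := by
    refine le_of_mul_le_mul_right ?_ hδ
    rw [mul_assoc, ← pow_succ]
    exact hab.trans (mul_le_mul_of_nonneg_left hr hL)
  calc ‖a‖ * δ ^ k ≤ (‖b‖ + ‖a - b‖) * δ ^ k := by
        gcongr
        exact norm_le_norm_add_norm_sub' a b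
    _ ≤ K + L := by
        rw [add_mul]
        exact add_le_add hb hsub

theorem norm_iteratedFDeriv_sub_mul_pow_le [NormedAddCommGroup A] [NormedSpace ℝ A] {F : V → A}
    {N k : ℕ} {x y z : V} {δ C : ℝ} (hδ : 0 < δ) (hF : ContDiff ℝ N F) (hk : k < N)
    (h : ∀ w ∈ closedBall x δ, ‖iteratedFDeriv ℝ (k + 1) F w‖ * δ ^ (k + 1) ≤ C)
    (hy : y ∈ closedBall x δ) (hz : z ∈ closedBall x δ) :
    ‖iteratedFDeriv ℝ k F z - iteratedFDeriv ℝ k F y‖ * δ ^ (k + 1) ≤ C * ‖z - y‖ := by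
  have hdiff : Differentiable ℝ (iteratedFDeriv ℝ k F) :=
    hF.differentiable_iteratedFDeriv (by exact_mod_cast hk)
  have hmvt : ‖iteratedFDeriv ℝ k F z - iteratedFDeriv ℝ k F y‖ ≤ C / δ ^ (k + 1) * ‖z - y‖ :=
    (convex_closedBall x δ).norm_image_sub_le_of_norm_fderiv_le (𝕜 := ℝ) (fun w _ => hdiff w)
      (fun w hw => by
        rw [norm_fderiv_iteratedFDeriv, le_div_iff₀ (by positivity)]
        exact h w hw) hy hz
  rwa [div_mul_eq_mul_div, le_div_iff₀ (by positivity)] at hmvt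

theorem iteratedFDeriv_comp_add_sub [NormedAddCommGroup A] [NormedSpace ℝ A] {F : V → A} {k : ℕ}
    (hF : ContDiff ℝ k F) (v y : V) :
    iteratedFDeriv ℝ k ((fun w => F (w + v)) - F) y =
      iteratedFDeriv ℝ k F (y + v) - iteratedFDeriv ℝ k F y := by
  have hcomp : ContDiff ℝ k fun w => F (w + v) := hF.comp (contDiff_id.add contDiff_const)
  rw [iteratedFDeriv_sub_apply hcomp.contDiffAt hF.contDiffAt, iteratedFDeriv_comp_add_right]

section Leibniz

variable [NormedRing A] [NormedAlgebra ℝ A] {F G : V → A} {N : ℕ} {δ a b : ℝ}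

theorem norm_iteratedFDeriv_mul_mul_pow_le {y : V} (hδ : 0 < δ) (hF : ContDiff ℝ N F)
    (hG : ContDiff ℝ N G) (ha : ∀ i ≤ N, ‖iteratedFDeriv ℝ i F y‖ * δ ^ i ≤ a)
    (hb : ∀ i ≤ N, ‖iteratedFDeriv ℝ i G y‖ * δ ^ i ≤ b) {k : ℕ} (hk : k ≤ N) :
    ‖iteratedFDeriv ℝ k (F * G) y‖ * δ ^ k ≤ 2 ^ k * (a * b) := by
  have hterm {i : ℕ} (hi : i ∈ Finset.range (k + 1)) :
      k.choose i * ‖iteratedFDeriv ℝ i F y‖ * ‖iteratedFDeriv ℝ (k - i) G y‖ * δ ^ k ≤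
        k.choose i * (a * b) := by
    have hik : i ≤ k := Nat.lt_succ_iff.1 (Finset.mem_range.1 hi)
    calc _ = k.choose i * ((‖iteratedFDeriv ℝ i F y‖ * δ ^ i) *
          (‖iteratedFDeriv ℝ (k - i) G y‖ * δ ^ (k - i))) := by
          rw [← pow_mul_pow_sub δ hik]
          ring
      _ ≤ k.choose i * (a * b) := by
          gcongr
          · exact le_trans (by positivity) (ha i (hik.trans hk))
          · exact ha i (hik.trans hk)
          · exact hb (k - i) ((Nat.sub_le k i).trans hk)
  calc ‖iteratedFDeriv ℝ k (F * G) y‖ * δ ^ k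
      ≤ (∑ i ∈ Finset.range (k + 1),
          k.choose i * ‖iteratedFDeriv ℝ i F y‖ * ‖iteratedFDeriv ℝ (k - i) G y‖) * δ ^ k := by
        gcongr
        exact norm_iteratedFDeriv_mul_le hF hG y (by exact_mod_cast hk)
    _ ≤ ∑ i ∈ Finset.range (k + 1), k.choose i * (a * b) := by
        rw [Finset.sum_mul]
        exact Finset.sum_le_sum fun i hi => hterm hi
    _ = 2 ^ k * (a * b) := by
        rw [← Finset.sum_mul]
        exact_mod_cast congrArg (fun c : ℕ => (c : ℝ) * (a * b)) (Nat.sum_range_choose k)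

-- Writing `τF = F(· + v)` with `v = z - y`, this is `τ(FG) - FG = τF (τG - G) + (τF - F) G`.
theorem norm_iteratedFDeriv_mul_sub_mul_pow_le {y z : V} {a' b' : ℝ} (hδ : 0 < δ)
    (hF : ContDiff ℝ N F) (hG : ContDiff ℝ N G)
    (ha : ∀ i ≤ N, ‖iteratedFDeriv ℝ i F z‖ * δ ^ i ≤ a)
    (hb : ∀ i ≤ N, ‖iteratedFDeriv ℝ i G y‖ * δ ^ i ≤ b)
    (ha' : ∀ i ≤ N, ‖iteratedFDeriv ℝ i F z - iteratedFDeriv ℝ i F y‖ * δ ^ i ≤ a')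
    (hb' : ∀ i ≤ N, ‖iteratedFDeriv ℝ i G z - iteratedFDeriv ℝ i G y‖ * δ ^ i ≤ b') :
    ‖iteratedFDeriv ℝ N (F * G) z - iteratedFDeriv ℝ N (F * G) y‖ * δ ^ N ≤
      2 ^ N * (a * b' + a' * b) := by
  obtain ⟨v, rfl⟩ : ∃ v, z = y + v := ⟨z - y, (add_sub_cancel y z).symm⟩
  have hle {i : ℕ} (hi : i ≤ N) : (i : WithTop ℕ∞) ≤ N := by exact_mod_cast hi
  have hτ : ContDiff ℝ N fun w : V => w + v := contDiff_id.add contDiff_const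
  set τF : V → A := fun w => F (w + v)
  set τG : V → A := fun w => G (w + v)
  have hτF : ContDiff ℝ N τF := hF.comp hτ
  have hτG : ContDiff ℝ N τG := hG.comp hτ
  have hFG : ContDiff ℝ N (F * G) := hF.mul hG
  have hdecomp : τF * τG - F * G = τF * (τG - G) + (τF - F) * G := by noncomm_ring
  have hsplit : iteratedFDeriv ℝ N (F * G) (y + v) - iteratedFDeriv ℝ N (F * G) y =
      iteratedFDeriv ℝ N (τF * (τG - G)) y + iteratedFDeriv ℝ N ((τF - F) * G) y := by
    rw [← iteratedFDeriv_comp_add_sub hFG]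
    exact (congrArg (fun H => iteratedFDeriv ℝ N H y) hdecomp).trans
      (iteratedFDeriv_add_apply (hτF.mul (hτG.sub hG)).contDiffAt
        ((hτF.sub hF).mul hG).contDiffAt)
  have hleft := norm_iteratedFDeriv_mul_mul_pow_le hδ hτF (hτG.sub hG)
    (fun i hi => by rw [iteratedFDeriv_comp_add_right]; exact ha i hi)
    (fun i hi => (iteratedFDeriv_comp_add_sub (hG.of_le (hle hi)) v y).symm ▸ hb' i hi) le_rfl
  have hright := norm_iteratedFDeriv_mul_mul_pow_le hδ (hτF.sub hF) hG
    (fun i hi => (iteratedFDeriv_comp_add_sub (hF.of_le (hle hi)) v y).symm ▸ ha' i hi) hb le_rfl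
  rw [hsplit, mul_add]
  refine (mul_le_mul_of_nonneg_right (norm_add_le _ _) (by positivity)).trans ?_
  rw [add_mul]
  exact add_le_add hleft hright

end Leibniz

/-- `F` is a `C^{N,1}` function whose derivatives on the ball of radius `δ` about `x`, after the
ball is rescaled to unit size, are bounded by `K`. -/
structure ScaledBound [NormedAddCommGroup A] [NormedSpace ℝ A] (N : ℕ) (x : V) (δ : ℝ)
    (F : V → A) (K : ℝ) : Prop where
  contDiff : ContDiff ℝ N F
  norm_le : ∀ k ≤ N, ∀ y ∈ closedBall x δ, ‖iteratedFDeriv ℝ k F y‖ * δ ^ k ≤ K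
  norm_sub_le : ∀ y ∈ closedBall x δ, ∀ z ∈ closedBall x δ,
    ‖iteratedFDeriv ℝ N F z - iteratedFDeriv ℝ N F y‖ * δ ^ (N + 1) ≤ K * ‖z - y‖

namespace ScaledBound

variable {N : ℕ} {x : V} {δ : ℝ}

section AddCommGroup

variable [NormedAddCommGroup A] [NormedSpace ℝ A] {F : V → A} {K K' : ℝ}

theorem nonneg (hδ : 0 < δ) (h : ScaledBound N x δ F K) : 0 ≤ K :=
  le_trans (by positivity) (h.norm_le 0 N.zero_le x (mem_closedBall_self hδ.le))

theorem mono (h : ScaledBound N x δ F K) (hK : K ≤ K') : ScaledBound N x δ F K' :=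
  ⟨h.contDiff, fun k hk y hy => (h.norm_le k hk y hy).trans hK, fun y hy z hz =>
    (h.norm_sub_le y hy z hz).trans (mul_le_mul_of_nonneg_right hK (norm_nonneg _))⟩

theorem norm_sub_le_of_le (hδ : 0 < δ) (h : ScaledBound N x δ F K) {k : ℕ} (hk : k ≤ N) {y z : V}
    (hy : y ∈ closedBall x δ) (hz : z ∈ closedBall x δ) :
    ‖iteratedFDeriv ℝ k F z - iteratedFDeriv ℝ k F y‖ * δ ^ (k + 1) ≤ K * ‖z - y‖ := by
  rcases hk.lt_or_eq with hk | rfl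
  · exact norm_iteratedFDeriv_sub_mul_pow_le hδ h.contDiff hk (h.norm_le (k + 1) hk) hy hz
  · exact h.norm_sub_le y hy z hz

theorem of_norm_le (hδ : 0 < δ) (hF : ContDiff ℝ (N + 1 : ℕ) F)
    (h : ∀ k ≤ N + 1, ∀ y ∈ closedBall x δ, ‖iteratedFDeriv ℝ k F y‖ * δ ^ k ≤ K) :
    ScaledBound N x δ F K :=
  ⟨hF.of_le (by exact_mod_cast N.le_succ), fun k hk => h k (hk.trans N.le_succ),
    fun _ hy _ hz => norm_iteratedFDeriv_sub_mul_pow_le hδ hF N.lt_succ_self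
      (h (N + 1) le_rfl) hy hz⟩

theorem of_jet_le (hδ : 0 < δ) (hF : ContDiff ℝ N F)
    (hjet : ∀ k ≤ N, ‖iteratedFDeriv ℝ k F x‖ * δ ^ k ≤ K)
    (hlip : ∀ y ∈ closedBall x δ, ∀ z ∈ closedBall x δ,
      ‖iteratedFDeriv ℝ N F z - iteratedFDeriv ℝ N F y‖ * δ ^ (N + 1) ≤ K * ‖z - y‖) :
    ScaledBound N x δ F ((N + 2) * K) := by
  have hK : 0 ≤ K := le_trans (by positivity) (hjet 0 N.zero_le)
  have hx : x ∈ closedBall x δ := mem_closedBall_self hδ.le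
  -- Taylor's formula, by descending induction on the order `k = N - j` of differentiation.
  have htaylor (j k : ℕ) (hjk : k + j = N) :
      ∀ y ∈ closedBall x δ, ‖iteratedFDeriv ℝ k F y‖ * δ ^ k ≤ (j + 2) * K := by
    induction j generalizing k with
    | zero =>
      obtain rfl : k = N := hjk
      intro y hy
      have hle := norm_mul_pow_le_of_lipschitz hδ (hjet k le_rfl) (hlip x hx y hy)
        (mem_closedBall_iff_norm.1 hy) hK
      push_cast
      linarith
    | succ j ih =>
      intro y hy
      have hstep := norm_iteratedFDeriv_sub_mul_pow_le hδ hF (by omega)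
        (ih (k + 1) (by omega)) hx hy
      have hle := norm_mul_pow_le_of_lipschitz hδ (hjet k (by omega)) hstep
        (mem_closedBall_iff_norm.1 hy) (by positivity)
      push_cast
      linarith
  refine ⟨hF, fun k hk y hy => ?_, fun y hy z hz => (hlip y hy z hz).trans ?_⟩
  · refine (htaylor (N - k) k (by omega) y hy).trans ?_
    gcongr
    exact Nat.sub_le N k
  · gcongr
    nlinarith [N.cast_nonneg (α := ℝ)]

end AddCommGroup

theorem mul [NormedRing A] [NormedAlgebra ℝ A] {F G : V → A} {K L : ℝ} (hδ : 0 < δ)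
    (hF : ScaledBound N x δ F K) (hG : ScaledBound N x δ G L) :
    ScaledBound N x δ (F * G) (2 ^ (N + 1) * (K * L)) := by
  have hK := hF.nonneg hδ
  have hL := hG.nonneg hδ
  refine ⟨hF.contDiff.mul hG.contDiff, fun k hk y hy => ?_, fun y hy z hz => ?_⟩
  · refine (norm_iteratedFDeriv_mul_mul_pow_le hδ hF.contDiff hG.contDiff
      (fun i hi => hF.norm_le i hi y hy) (fun i hi => hG.norm_le i hi y hy) hk).trans ?_
    gcongr
    · norm_num
    · exact hk.trans N.le_succ
  · have hF_sub (i : ℕ) (hi : i ≤ N) :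
        ‖iteratedFDeriv ℝ i F z - iteratedFDeriv ℝ i F y‖ * δ ^ i ≤ K * ‖z - y‖ / δ := by
      rw [le_div_iff₀ hδ, mul_assoc, ← pow_succ]
      exact hF.norm_sub_le_of_le hδ hi hy hz
    have hG_sub (i : ℕ) (hi : i ≤ N) :
        ‖iteratedFDeriv ℝ i G z - iteratedFDeriv ℝ i G y‖ * δ ^ i ≤ L * ‖z - y‖ / δ := by
      rw [le_div_iff₀ hδ, mul_assoc, ← pow_succ]
      exact hG.norm_sub_le_of_le hδ hi hy hz
    have hFG_sub := norm_iteratedFDeriv_mul_sub_mul_pow_le hδ hF.contDiff hG.contDiff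
      (fun i hi => hF.norm_le i hi z hz) (fun i hi => hG.norm_le i hi y hy) hF_sub hG_sub
    calc _ ≤ 2 ^ N * (K * (L * ‖z - y‖ / δ) + K * ‖z - y‖ / δ * L) * δ := by
          rw [pow_succ, ← mul_assoc]
          exact mul_le_mul_of_nonneg_right hFG_sub hδ.le
      _ = 2 ^ (N + 1) * (K * L) * ‖z - y‖ := by
          field_simp
          ring

end ScaledBound

end ScaledBounds

/-! ### Cutoff functions and globalization -/

section Localization

open Metric

variable {V W : Type*} [NormedAddCommGroup V]

theorem norm_sub_le_of_support_subset [NormedAddCommGroup W] {g : V → W} {x : V} {δ K : ℝ}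
    (hδ : 0 < δ) (hsup : ∀ y, ‖g y‖ ≤ K * δ)
    (hlip : ∀ y ∈ closedBall x δ, ∀ z ∈ closedBall x δ, ‖g z - g y‖ ≤ K * ‖z - y‖)
    (hsupp : Function.support g ⊆ closedBall x (δ / 2)) (y z : V) :
    ‖g z - g y‖ ≤ 2 * K * ‖z - y‖ := by
  have hK : 0 ≤ K := nonneg_of_mul_nonneg_left ((norm_nonneg _).trans (hsup x)) hδ
  have hzero {w : V} (hw : w ∉ closedBall x (δ / 2)) : g w = 0 :=
    Function.notMem_support.1 fun hw' => hw (hsupp hw')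
  wlog hy : y ∈ closedBall x (δ / 2) generalizing y z
  · by_cases hz : z ∈ closedBall x (δ / 2)
    · rw [norm_sub_rev, norm_sub_rev z]
      exact this z y hz
    · rw [hzero hy, hzero hz, sub_zero, norm_zero]
      positivity
  by_cases hz : z ∈ closedBall x δ
  · refine (hlip y (closedBall_subset_closedBall (half_le_self hδ.le) hy) z hz).trans ?_
    nlinarith [mul_nonneg hK (norm_nonneg (z - y))]
  · have hfar : δ / 2 ≤ ‖z - y‖ := by
      rw [mem_closedBall_iff_norm] at hy hz
      linarith [norm_sub_le_norm_sub_add_norm_sub z y x]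
    rw [hzero fun hz' => hz (closedBall_subset_closedBall (half_le_self hδ.le) hz'), zero_sub,
      norm_neg]
    nlinarith [hsup y, mul_le_mul_of_nonneg_left hfar hK]

variable [NormedSpace ℝ V]

theorem exists_norm_iteratedFDeriv_le_of_hasCompactSupport [NormedAddCommGroup W] [NormedSpace ℝ W]
    {φ : V → W} {N : ℕ} (hφ : ContDiff ℝ N φ) (hsupp : HasCompactSupport φ) :
    ∃ K, ∀ k ≤ N, ∀ y, ‖iteratedFDeriv ℝ k φ y‖ ≤ K := by
  have hbound (k : Fin (N + 1)) : ∃ K, ∀ y, ‖iteratedFDeriv ℝ k φ y‖ ≤ K :=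
    (hsupp.iteratedFDeriv k).exists_bound_of_continuous
      (hφ.continuous_iteratedFDeriv (by exact_mod_cast k.is_le))
  choose K hK using hbound
  refine ⟨Finset.univ.sup' Finset.univ_nonempty K, fun k hk y => ?_⟩
  exact (hK ⟨k, Nat.lt_succ_of_le hk⟩ y).trans (Finset.le_sup' K (Finset.mem_univ _))

theorem norm_iteratedFDeriv_comp_rescale_mul_pow [NormedAddCommGroup W] [NormedSpace ℝ W]
    {φ : V → W} {k : ℕ} (hφ : ContDiff ℝ k φ) {δ : ℝ} (hδ : 0 < δ) (x y : V) :
    ‖iteratedFDeriv ℝ k (fun w => φ (δ⁻¹ • (w - x))) y‖ * δ ^ k =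
      ‖iteratedFDeriv ℝ k φ (δ⁻¹ • (y - x))‖ := by
  rw [iteratedFDeriv_comp_sub (f := fun w => φ (δ⁻¹ • w)) k x y,
    congrFun (iteratedFDeriv_comp_const_smul δ⁻¹ hφ) (y - x), norm_smul, norm_pow, norm_inv,
    Real.norm_of_nonneg hδ.le, mul_right_comm, ← mul_pow, inv_mul_cancel₀ hδ.ne', one_pow, one_mul]

theorem exists_scaledBound_cutoff [HasContDiffBump V] [FiniteDimensional ℝ V] (N : ℕ) {c : ℝ}
    (hc : 0 < c) :
    ∃ K, 0 ≤ K ∧ ∀ (x : V) {δ : ℝ}, 0 < δ → ∃ η : V → ℝ, ScaledBound N x δ η K ∧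
      (∀ y, η y ∈ Set.Icc 0 1) ∧ η =ᶠ[nhds x] 1 ∧ Function.support η ⊆ closedBall x (c * δ) := by
  let φ : ContDiffBump (0 : V) := ⟨c / 2, c, by positivity, by linarith⟩
  have hφ (k : ℕ) : ContDiff ℝ k φ := φ.contDiff (n := k)
  obtain ⟨K, hK⟩ := exists_norm_iteratedFDeriv_le_of_hasCompactSupport (hφ (N + 1))
    φ.hasCompactSupport
  refine ⟨K, (norm_nonneg _).trans (hK 0 (Nat.zero_le _) 0), fun x δ hδ =>
    ⟨fun y => φ (δ⁻¹ • (y - x)), .of_norm_le hδ ?_ ?_, fun y => ⟨φ.nonneg, φ.le_one⟩, ?_, ?_⟩⟩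
  · exact (hφ (N + 1)).comp ((contDiff_id.sub contDiff_const).const_smul δ⁻¹)
  · intro k hk y _
    rw [norm_iteratedFDeriv_comp_rescale_mul_pow (hφ k) hδ]
    exact hK k hk _
  · have hlim : Filter.Tendsto (fun y => δ⁻¹ • (y - x)) (nhds x) (nhds 0) := by
      have hcont : Continuous fun y => δ⁻¹ • (y - x) := by fun_prop
      simpa using hcont.tendsto x
    exact hlim.eventually φ.eventuallyEq_one
  · intro y hy
    have hball : δ⁻¹ • (y - x) ∈ ball 0 c := φ.support_eq ▸ hy
    rw [mem_ball_zero_iff, norm_smul, norm_inv, Real.norm_of_nonneg hδ.le, inv_mul_lt_iff₀' hδ]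
      at hball
    exact mem_closedBall_iff_norm.2 hball.le

theorem CmLipNormLe.of_scaledBound {m n : ℕ} {x : Euc n} {δ K : ℝ} {G : Euc n → ℝ} (hδ : 0 < δ)
    (hδ1 : δ ≤ 1) (hG : ScaledBound (m - 1) x δ G (K * δ ^ (m - 1 + 1)))
    (hsupp : Function.support G ⊆ closedBall x (δ / 2)) : CmLipNormLe m n G (2 * K) := by
  have hK : 0 ≤ K := nonneg_of_mul_nonneg_left (hG.nonneg hδ) (by positivity)
  have hsupp' (k : ℕ) : Function.support (iteratedFDeriv ℝ k G) ⊆ closedBall x (δ / 2) :=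
    (support_iteratedFDeriv_subset k).trans (closure_minimal hsupp isClosed_closedBall)
  have hsup (k : ℕ) (hk : k ≤ m - 1) (y : Euc n) : ‖iteratedFDeriv ℝ k G y‖ ≤ K * δ := by
    by_cases hy : y ∈ closedBall x (δ / 2)
    · refine le_of_mul_le_mul_right ((hG.norm_le k hk y
        (closedBall_subset_closedBall (half_le_self hδ.le) hy)).trans ?_) (pow_pos hδ k)
      rw [mul_assoc, ← pow_succ']
      exact mul_le_mul_of_nonneg_left (pow_le_pow_of_le_one hδ.le hδ1 (by omega)) hK
    · rw [Function.notMem_support.1 fun hy' => hy (hsupp' k hy'), norm_zero]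
      positivity
  have hlip := norm_sub_le_of_support_subset hδ (hsup (m - 1) le_rfl) (fun y hy z hz => by
    refine le_of_mul_le_mul_right ((hG.norm_sub_le y hy z hz).trans_eq ?_)
      (pow_pos hδ (m - 1 + 1))
    ring) (hsupp' (m - 1))
  refine ⟨hG.contDiff, fun α hα y => ?_, fun α hα i y t => ?_⟩
  · refine (abs_mD_le (hG.contDiff.of_le (by exact_mod_cast hα)) y).trans ?_
    nlinarith [hsup _ hα y]
  · rw [← hα] at hlip hG
    refine (abs_mD_sub_mD_le hG.contDiff _ _).trans ((hlip y _).trans_eq ?_)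
    rw [add_sub_cancel_left, norm_smul, PiLp.norm_single, norm_one, mul_one,
      Real.norm_eq_abs]

end Localization

/-! ### Localized squares -/

section LocalizedSquare

open Metric

variable {V : Type*} [NormedAddCommGroup V] [NormedSpace ℝ V] {N : ℕ} {x y : V} {δ K : ℝ}
  {g : V → ℝ}

theorem ScaledBound.abs_sub_mul_le (hδ : 0 < δ) (hg : ScaledBound N x δ g K)
    (hy : y ∈ closedBall x δ) : |g y - g x| * δ ≤ K * ‖y - x‖ := by
  have h := hg.norm_sub_le_of_le hδ N.zero_le (mem_closedBall_self hδ.le) hy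
  rwa [iteratedFDeriv_zero_eq_comp, Function.comp_apply, Function.comp_apply, ← map_sub,
    LinearIsometryEquiv.norm_map, Real.norm_eq_abs, zero_add, pow_one] at h

theorem ScaledBound.mul_self_le_one (hδ : 0 < δ) (hg : ScaledBound N x δ g K)
    (hx : g x ^ 2 ≤ 1 / 2) (hy : y ∈ closedBall x δ) (hyx : K * ‖y - x‖ ≤ δ / 10) :
    g y * g y ≤ 1 := by
  have hclose : |g y - g x| ≤ 1 / 10 :=
    le_of_mul_le_mul_right ((hg.abs_sub_mul_le hδ hy).trans (by linarith)) hδ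
  rw [abs_le] at hclose
  have hgx : |g x| ≤ 8 / 10 := abs_le_of_sq_le_sq (by linarith) (by norm_num)
  rw [abs_le] at hgx
  nlinarith

theorem exists_scaledBound_localized_sq [HasContDiffBump V] [FiniteDimensional ℝ V] (N : ℕ)
    (hK : 0 ≤ K) :
    ∃ L, 0 ≤ L ∧ ∀ (x : V) {δ : ℝ} {g : V → ℝ}, 0 < δ → ScaledBound N x δ g K →
      g x ^ 2 ≤ 1 / 2 → ∃ χ : V → ℝ, ScaledBound N x δ χ L ∧ (∀ y, χ y ∈ Set.Icc 0 1) ∧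
        JetEq N x χ (g * g) ∧ Function.support χ ⊆ closedBall x (δ / 2) := by
  set c : ℝ := 1 / (10 * (K + 1)) with hc
  have hc_pos : 0 < c := by positivity
  have hcK : 10 * (K * c) + 10 * c = 1 := by
    rw [hc]
    field_simp
  have hc_half : c ≤ 1 / 2 := by linarith [mul_nonneg hK hc_pos.le]
  obtain ⟨Kη, hKη, hcutoff⟩ := exists_scaledBound_cutoff (V := V) N hc_pos
  refine ⟨2 ^ (N + 1) * (Kη * (2 ^ (N + 1) * (K * K))), by positivity, fun x δ g hδ hg hgx => ?_⟩
  obtain ⟨η, hη, hη_mem, hη_one, hη_supp⟩ := hcutoff x hδ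
  refine ⟨η * (g * g), hη.mul hδ (hg.mul hδ hg), fun y => ⟨?_, ?_⟩, ?_, ?_⟩
  · exact mul_nonneg (hη_mem y).1 (mul_self_nonneg (g y))
  · by_cases hy : y ∈ Function.support η
    · have hyx : ‖y - x‖ ≤ c * δ := mem_closedBall_iff_norm.1 (hη_supp hy)
      refine mul_le_one₀ (hη_mem y).2 (mul_self_nonneg _) (hg.mul_self_le_one hδ hgx ?_ ?_)
      · exact mem_closedBall_iff_norm.2 (hyx.trans (by nlinarith [hc_half]))
      · nlinarith [mul_le_mul_of_nonneg_left hyx hK]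
    · rw [Pi.mul_apply, Function.notMem_support.1 hy, zero_mul]
      exact zero_le_one
  · refine .of_eventuallyEq (hη.mul hδ (hg.mul hδ hg)).contDiff (hg.contDiff.mul hg.contDiff) ?_
    filter_upwards [hη_one] with y hy
    simp [hy]
  · refine (Function.support_mul_subset_left η (g * g)).trans (hη_supp.trans ?_)
    exact closedBall_subset_closedBall (by nlinarith [hc_half])

end LocalizedSquare

/-! ### Convex shape fields -/

section ShapeField

variable {m n : ℕ}

/-- A `(C, δmax)`-convex shape field: the sets `Γ x M` are convex, increase with `M`, and are
stable, up to the factor `C` in `M`, under gluing two polynomials that agree to scale `δ ≤ δmax` at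
`x` by a partition of unity `Q₁² + Q₂² = 1` of scale `δ` in the ring of jets at `x`. -/
structure IsConvexShapeField (m n : ℕ) (E : Set (Euc n)) (Γ : Euc n → ℝ → Set (MPoly n))
    (C δmax : ℝ) : Prop where
  convex : ∀ x ∈ E, ∀ M : ℝ, 0 < M → Convex ℝ (Γ x M)
  mono : ∀ x ∈ E, ∀ M' M : ℝ, 0 < M' → M' ≤ M → Γ x M' ⊆ Γ x M
  jmul_add_jmul_mem : ∀ δ : ℝ, 0 < δ → δ ≤ δmax → ∀ x ∈ E, ∀ M : ℝ, 0 < M →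
    ∀ P₁ ∈ Γ x M, ∀ P₂ ∈ Γ x M,
    (∀ β : Fin n → ℕ, deg β ≤ m - 1 → |mD β (peval (P₁ - P₂)) x| ≤ M * δ ^ (m - deg β)) →
    ∀ Q₁ Q₂ : MPoly n, Q₁.totalDegree ≤ m - 1 → Q₂.totalDegree ≤ m - 1 →
    (∀ β : Fin n → ℕ, deg β ≤ m - 1 →
      |mD β (peval Q₁) x| ≤ δ ^ (-(deg β : ℤ)) ∧ |mD β (peval Q₂) x| ≤ δ ^ (-(deg β : ℤ))) →
    jmul m n x Q₁ Q₁ + jmul m n x Q₂ Q₂ = 1 →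
    jmul m n x (jmul m n x Q₁ Q₁) P₁ + jmul m n x (jmul m n x Q₂ Q₂) P₂ ∈ Γ x (C * M)

theorem mem_GammaF'_iff {f : Euc n → ℝ} {x : Euc n} {M : ℝ} {P : MPoly n} :
    P ∈ GammaF' m n f x M ↔ P.totalDegree ≤ m - 1 ∧ peval P x = f x ∧
      ∃ F, CmLipNormLe m n F M ∧ (∀ y, 0 ≤ F y) ∧ JetEq (m - 1) x (peval P) F := by
  constructor
  · rintro ⟨⟨F, hF, hF0, hdeg, hjet⟩, hPx⟩
    exact ⟨hdeg, hPx, F, hF, hF0, (jetEq_iff_mD_eq (contDiff_peval P) hF.1).2 hjet⟩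
  · rintro ⟨hdeg, hPx, F, hF, hF0, hjet⟩
    exact ⟨⟨F, hF, hF0, hdeg, (jetEq_iff_mD_eq (contDiff_peval P) hF.1).1 hjet⟩, hPx⟩

theorem GammaF'_mono (f : Euc n → ℝ) (x : Euc n) : Monotone (GammaF' m n f x) :=
  fun _ _ h _ ⟨⟨F, hF, hP⟩, hPx⟩ => ⟨⟨F, hF.mono h, hP⟩, hPx⟩

theorem convex_GammaF' (f : Euc n → ℝ) (x : Euc n) (M : ℝ) : Convex ℝ (GammaF' m n f x M) := by
  intro P hP Q hQ a b ha hb hab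
  obtain ⟨hP_deg, hPx, F, hF, hF0, hPF⟩ := mem_GammaF'_iff.1 hP
  obtain ⟨hQ_deg, hQx, G, hG, hG0, hQG⟩ := mem_GammaF'_iff.1 hQ
  refine mem_GammaF'_iff.2 ⟨?_, ?_, a • F + b • G, ?_, fun y => ?_, ?_⟩
  · exact (MvPolynomial.totalDegree_add _ _).trans (max_le
      ((MvPolynomial.totalDegree_smul_le a P).trans hP_deg)
      ((MvPolynomial.totalDegree_smul_le b Q).trans hQ_deg))
  · simp only [peval_add, peval_smul, Pi.add_apply, Pi.smul_apply, hPx, hQx]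
    exact Convex.combo_self hab (f x)
  · refine ((hF.const_smul a).add (hG.const_smul b)).mono ?_
    rw [abs_of_nonneg ha, abs_of_nonneg hb, ← add_mul, hab, one_mul]
  · exact add_nonneg (mul_nonneg ha (hF0 y)) (mul_nonneg hb (hG0 y))
  · rw [peval_add, peval_smul, peval_smul]
    exact (hPF.const_smul a).add (hQG.const_smul b)

theorem scaledBound_peval {N : ℕ} {x : Euc n} {δ : ℝ} (hδ : 0 < δ) {Q : MPoly n}
    (hdeg : Q.totalDegree ≤ N)
    (hjet : ∀ α : Fin n → ℕ, deg α ≤ N → |mD α (peval Q) x| ≤ δ ^ (-(deg α : ℤ))) :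
    ScaledBound N x δ (peval Q) ((N + 2) * (n + 1) ^ N) := by
  refine .of_jet_le hδ (contDiff_peval Q) (fun k hk => ?_) fun y hy z hz => ?_
  · refine (norm_iteratedFDeriv_mul_pow_le_of_mD_le (K := 1) (contDiff_peval Q) hδ
      (fun α hα => ?_) hk).trans_eq (mul_one _)
    have h := hjet α hα
    rwa [zpow_neg, zpow_natCast, ← one_div, le_div_iff₀ (by positivity)] at h
  · refine norm_iteratedFDeriv_sub_mul_pow_le (N := N + 1) hδ (contDiff_peval Q) N.lt_succ_self
      (fun w _ => ?_) hy hz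
    rw [iteratedFDeriv_peval_of_totalDegree_lt (Nat.lt_succ_of_le hdeg), norm_zero, zero_mul]
    positivity

theorem CmLipNormLe.scaledBound {x : Euc n} {δ M : ℝ} {F : Euc n → ℝ} (hm : 0 < m) (hδ : 0 < δ)
    (hF : CmLipNormLe m n F M)
    (hjet : ∀ α : Fin n → ℕ, deg α ≤ m - 1 → |mD α F x| ≤ M * δ ^ (m - deg α)) :
    ScaledBound (m - 1) x δ F ((m + 1) * ((n + 1) ^ m * (M * δ ^ m))) := by
  obtain ⟨N, rfl⟩ : ∃ N, m = N + 1 := ⟨m - 1, by omega⟩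
  simp only [Nat.add_sub_cancel] at hjet ⊢
  have hM := hF.nonneg
  have hpow : ((n : ℝ) + 1) ^ N ≤ (n + 1) ^ (N + 1) :=
    pow_le_pow_right₀ (le_add_of_nonneg_left n.cast_nonneg) N.le_succ
  have hpow' : (n : ℝ) ^ N * n ≤ (n + 1) ^ (N + 1) := by
    rw [← pow_succ]
    gcongr
    exact le_add_of_nonneg_right zero_le_one
  have hN : ((N + 1 : ℕ) : ℝ) + 1 = N + 2 := by
    push_cast
    ring
  rw [hN]
  refine .of_jet_le hδ hF.1 (fun k hk => ?_) fun y _ z _ => ?_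
  · refine (norm_iteratedFDeriv_mul_pow_le_of_mD_le (K := M * δ ^ (N + 1)) hF.1 hδ
      (fun α hα => ?_) hk).trans (mul_le_mul_of_nonneg_right hpow (by positivity))
    rw [← pow_sub_mul_pow δ (hα.trans N.le_succ), ← mul_assoc]
    exact mul_le_mul_of_nonneg_right (hjet α hα) (by positivity)
  · calc _ ≤ n ^ N * (n * M * ‖z - y‖) * δ ^ (N + 1) := by
          gcongr
          exact hF.norm_iteratedFDeriv_sub_le y z
      _ = n ^ N * n * (M * δ ^ (N + 1)) * ‖z - y‖ := by ring
      _ ≤ (n + 1) ^ (N + 1) * (M * δ ^ (N + 1)) * ‖z - y‖ := by gcongr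

theorem jetEq_jmul_add_jmul {x : Euc n} {P₁ P₂ Q₁ Q₂ : MPoly n} {F₁ F₂ χ : Euc n → ℝ}
    (hsum : jmul m n x Q₁ Q₁ + jmul m n x Q₂ Q₂ = 1) (h₁ : JetEq (m - 1) x (peval P₁) F₁)
    (h₂ : JetEq (m - 1) x (peval P₂) F₂) (hχ : JetEq (m - 1) x χ (peval Q₂ * peval Q₂)) :
    JetEq (m - 1) x
      (peval (jmul m n x (jmul m n x Q₁ Q₁) P₁ + jmul m n x (jmul m n x Q₂ Q₂) P₂))
      (F₁ - χ * (F₁ - F₂)) := by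
  set q₁ := jmul m n x Q₁ Q₁
  set q₂ := jmul m n x Q₂ Q₂
  have hq₂ : JetEq (m - 1) x (peval q₂) χ := (jetEq_jmul x Q₂ Q₂).trans hχ.symm
  calc JetEq (m - 1) x (peval (jmul m n x q₁ P₁ + jmul m n x q₂ P₂))
        (peval q₁ * peval P₁ + peval q₂ * peval P₂) := by
        rw [peval_add]
        exact (jetEq_jmul x q₁ P₁).add (jetEq_jmul x q₂ P₂)
    _ = peval P₁ - peval q₂ * (peval P₁ - peval P₂) := by
        rw [eq_sub_of_add_eq hsum, peval_sub, peval_one]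
        ring
    JetEq (m - 1) x _ (F₁ - χ * (F₁ - F₂)) := h₁.sub (hq₂.mul (h₁.sub h₂))

theorem jmul_add_jmul_mem_GammaF' {f χ : Euc n → ℝ} {x : Euc n} {δ M L : ℝ}
    {P₁ P₂ Q₁ Q₂ : MPoly n} (hm : 0 < m) (hδ : 0 < δ) (hδ1 : δ ≤ 1)
    (hP₁ : P₁ ∈ GammaF' m n f x M) (hP₂ : P₂ ∈ GammaF' m n f x M)
    (hP : ∀ β : Fin n → ℕ, deg β ≤ m - 1 → |mD β (peval (P₁ - P₂)) x| ≤ M * δ ^ (m - deg β))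
    (hQ : jmul m n x Q₁ Q₁ + jmul m n x Q₂ Q₂ = 1) (hχ : ScaledBound (m - 1) x δ χ L)
    (hχ_mem : ∀ y, χ y ∈ Set.Icc 0 1) (hχ_jet : JetEq (m - 1) x χ (peval Q₂ * peval Q₂))
    (hχ_supp : Function.support χ ⊆ Metric.closedBall x (δ / 2)) :
    jmul m n x (jmul m n x Q₁ Q₁) P₁ + jmul m n x (jmul m n x Q₂ Q₂) P₂ ∈
      GammaF' m n f x ((1 + 2 ^ (m + 2) * (L * ((m + 1) * (n + 1) ^ m))) * M) := by
  obtain ⟨-, hP₁x, F₁, hF₁, hF₁0, hPF₁⟩ := mem_GammaF'_iff.1 hP₁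
  obtain ⟨-, hP₂x, F₂, hF₂, hF₂0, hPF₂⟩ := mem_GammaF'_iff.1 hP₂
  have hM := hF₁.nonneg
  have hjet := jetEq_jmul_add_jmul hQ hPF₁ hPF₂ hχ_jet
  have hdiff : ScaledBound (m - 1) x δ (F₁ - F₂)
      ((m + 1) * ((n + 1) ^ m * ((M + M) * δ ^ m))) := by
    refine (hF₁.sub hF₂).scaledBound hm hδ fun α hα => ?_
    rw [← (jetEq_iff_mD_eq (contDiff_peval _) (hF₁.sub hF₂).1).1
      (peval_sub P₁ P₂ ▸ hPF₁.sub hPF₂) α hα]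
    refine (hP α hα).trans ?_
    gcongr
    exact le_add_of_nonneg_left hM
  have hprod : CmLipNormLe m n (χ * (F₁ - F₂))
      (2 * (2 ^ (m + 1) * (L * ((m + 1) * (n + 1) ^ m)) * M)) := by
    refine .of_scaledBound hδ hδ1 ((hχ.mul hδ hdiff).mono (le_of_eq ?_))
      ((Function.support_mul_subset_left _ _).trans hχ_supp)
    rw [Nat.sub_add_cancel hm]
    ring
  refine mem_GammaF'_iff.2 ⟨?_, ?_, _, (hF₁.sub hprod).mono (le_of_eq (by ring)), ?_, hjet⟩
  · exact (MvPolynomial.totalDegree_add _ _).trans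
      (max_le (totalDegree_jetTrunc_le _ x) (totalDegree_jetTrunc_le _ x))
  · simp only [hjet.apply_eq, Pi.sub_apply, Pi.mul_apply, ← hPF₁.apply_eq, ← hPF₂.apply_eq, hP₁x,
      hP₂x, sub_self, mul_zero, sub_zero]
  · intro y
    calc 0 ≤ (1 - χ y) * F₁ y + χ y * F₂ y :=
          add_nonneg (mul_nonneg (sub_nonneg.2 (hχ_mem y).2) (hF₁0 y))
            (mul_nonneg (hχ_mem y).1 (hF₂0 y))
      _ = (F₁ - χ * (F₁ - F₂)) y := by
          simp only [Pi.sub_apply, Pi.mul_apply]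
          ring

theorem exists_jmul_add_jmul_mem_GammaF'_of_sq_le (n : ℕ) (hm : 0 < m) :
    ∃ C : ℝ, 0 < C ∧ ∀ {f : Euc n → ℝ} {x : Euc n} {δ M : ℝ} {P₁ P₂ Q₁ Q₂ : MPoly n},
      0 < δ → δ ≤ 1 → P₁ ∈ GammaF' m n f x M → P₂ ∈ GammaF' m n f x M →
      (∀ β : Fin n → ℕ, deg β ≤ m - 1 → |mD β (peval (P₁ - P₂)) x| ≤ M * δ ^ (m - deg β)) →
      Q₂.totalDegree ≤ m - 1 →
      (∀ β : Fin n → ℕ, deg β ≤ m - 1 → |mD β (peval Q₂) x| ≤ δ ^ (-(deg β : ℤ))) →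
      jmul m n x Q₁ Q₁ + jmul m n x Q₂ Q₂ = 1 → peval Q₂ x ^ 2 ≤ 1 / 2 →
      jmul m n x (jmul m n x Q₁ Q₁) P₁ + jmul m n x (jmul m n x Q₂ Q₂) P₂ ∈
        GammaF' m n f x (C * M) := by
  obtain ⟨L, hL, hlocal⟩ := exists_scaledBound_localized_sq (V := Euc n) (m - 1)
    (K := ((m - 1 : ℕ) + 2) * (n + 1) ^ (m - 1)) (by positivity)
  refine ⟨1 + 2 ^ (m + 2) * (L * ((m + 1) * (n + 1) ^ m)), by positivity, ?_⟩
  intro f x δ M P₁ P₂ Q₁ Q₂ hδ hδ1 hP₁ hP₂ hP hQ_deg hQ_jet hQ hQx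
  obtain ⟨χ, hχ, hχ_mem, hχ_jet, hχ_supp⟩ :=
    hlocal x hδ (scaledBound_peval hδ hQ_deg hQ_jet) hQx
  exact jmul_add_jmul_mem_GammaF' hm hδ hδ1 hP₁ hP₂ hP hQ hχ hχ_mem hχ_jet hχ_supp

theorem abs_mD_peval_sub_comm (P Q : MPoly n) (α : Fin n → ℕ) (x : Euc n) :
    |mD α (peval (P - Q)) x| = |mD α (peval (Q - P)) x| := by
  rw [← neg_sub, ← neg_one_smul ℝ, peval_smul, mD_const_smul (-1) (contDiff_peval _), abs_mul,
    abs_neg, abs_one, one_mul]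

theorem sq_peval_add_sq_peval {x : Euc n} {Q₁ Q₂ : MPoly n}
    (h : jmul m n x Q₁ Q₁ + jmul m n x Q₂ Q₂ = 1) : peval Q₁ x ^ 2 + peval Q₂ x ^ 2 = 1 := by
  have hx := congrFun (congrArg peval h) x
  rwa [peval_add, peval_one, Pi.add_apply, (jetEq_jmul x Q₁ Q₁).apply_eq,
    (jetEq_jmul x Q₂ Q₂).apply_eq, Pi.mul_apply, Pi.mul_apply, ← sq, ← sq] at hx

theorem GammaF'_is_convex_shape_field_general (m n : ℕ) (hm : 0 < m) :
    ∃ C : ℝ, 0 < C ∧ ∀ (E : Set (Euc n)) (f : Euc n → ℝ),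
      IsConvexShapeField m n E (GammaF' m n f) C 1 := by
  obtain ⟨C, hC, hmem⟩ := exists_jmul_add_jmul_mem_GammaF'_of_sq_le n hm
  refine ⟨C, hC, fun E f => ⟨fun x _ M _ => convex_GammaF' f x M,
    fun x _ M' M _ h => GammaF'_mono f x h, ?_⟩⟩
  intro δ hδ hδ1 x _ M _ P₁ hP₁ P₂ hP₂ hP Q₁ Q₂ hQ₁ hQ₂ hQ_jet hQ
  have hsq := sq_peval_add_sq_peval hQ
  rcases le_total (peval Q₂ x ^ 2) (1 / 2) with hx | hx
  · exact hmem hδ hδ1 hP₁ hP₂ hP hQ₂ (fun β hβ => (hQ_jet β hβ).2) hQ hx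
  · rw [add_comm] at hQ ⊢
    exact hmem hδ hδ1 hP₂ hP₁ (fun β hβ => abs_mD_peval_sub_comm P₁ P₂ β x ▸ hP β hβ) hQ₁
      (fun β hβ => (hQ_jet β hβ).1) hQ (by linarith)

end ShapeField

/-- **Lemma 4.1**: `Γ⃗'_f` is a `(C,1)`-convex shape field. -/
theorem GammaF'_is_convex_shape_field (m n : ℕ) (hm : 0 < m) (hn : 0 < n) :
    ∃ C : ℝ, 0 < C ∧
      ∀ (E : Set (Euc n)), E.Finite → ∀ f : Euc n → ℝ, (∀ x ∈ E, 0 ≤ f x) →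
        (∀ x ∈ E, ∀ M : ℝ, 0 < M → Convex ℝ (GammaF' m n f x M)) ∧
        (∀ x ∈ E, ∀ M' M : ℝ, 0 < M' → M' ≤ M → GammaF' m n f x M' ⊆ GammaF' m n f x M) ∧
        (∀ δ : ℝ, 0 < δ → δ ≤ 1 → ∀ x ∈ E, ∀ M : ℝ, 0 < M →
          ∀ P₁ ∈ GammaF' m n f x M, ∀ P₂ ∈ GammaF' m n f x M,
          (∀ β : Fin n → ℕ, deg β ≤ m - 1 →
            |mD β (peval (P₁ - P₂)) x| ≤ M * δ ^ (m - deg β)) →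
          ∀ Q₁ Q₂ : MPoly n,
            MvPolynomial.totalDegree Q₁ ≤ m - 1 → MvPolynomial.totalDegree Q₂ ≤ m - 1 →
          (∀ β : Fin n → ℕ, deg β ≤ m - 1 →
            |mD β (peval Q₁) x| ≤ δ ^ (-(deg β : ℤ)) ∧
            |mD β (peval Q₂) x| ≤ δ ^ (-(deg β : ℤ))) →
          jmul m n x Q₁ Q₁ + jmul m n x Q₂ Q₂ = 1 →
          jmul m n x (jmul m n x Q₁ Q₁) P₁ + jmul m n x (jmul m n x Q₂ Q₂) P₂
            ∈ GammaF' m n f x (C * M)) := by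
  obtain ⟨C, hC, h⟩ := GammaF'_is_convex_shape_field_general m n hm
  exact ⟨C, hC, fun E _ f _ => ⟨(h E f).convex, (h E f).mono, (h E f).jmul_add_jmul_mem⟩⟩

end
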